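/- There exist a constant c > 0 and a positive integer r_0 such that for every integer r ≥ r_0, the number of ordered pairs (A_1, A_2) of disjoint sets with A_1 ∪ A_2 = [0, r−1] such that both A_1 and A_2 are MSTD is at least c · 2^{r}. -/

import Mathlib

/-!
The proof prescribes the two ends of `A ⊆ [0, n-1]` (its fringes, of length `38`) and lets the
middle part `M ⊆ [38, n-39]` vary freely.

Let `[0, 37] = L ∪ R` be the partition `leftFringe`, `rightFringe`, and let
`A = L ∪ M ∪ (n-1-R)`. Then `[0, n-1] \ A` has the same shape with `L` and `R` exchanged and `M`
replaced by its complement in the middle. Sums of `A` in `[0, 37]` are those of `L + L`, sums in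
the top `38` places are the reflections of those of `R + R`, while the differences of absolute
value at least `n-38` correspond, twice, to the elements of `L + R` in `[0, 37]`. The partition is
chosen so that `|(L+L) ∩ [0,37]| + |(R+R) ∩ [0,37]| > 2 |(L+R) ∩ [0,37]|`, a condition symmetric
in `L` and `R`. Hence both parts are MSTD as soon as each of them has all the sums
in `[38, 2n-40]`; differences need no control, since missing ones only help (`mstd_build`).

Sums in `[38, 69]` (and their reflections) come from the fringes alone. For `70 ≤ k ≤ n-1` the sum
`k` is missed only if `M` contains none of at least `16 + (k-70)/4` pairwise disjoint sets of size
at most `2`, which happens for a proportion at most `(3/4)^(16 + (k-70)/4)` of all `M`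
(`card_avoid_le`). Summing over `k` bounds the proportion of bad `M` by
`16 (3/4)^16 < 3/16` (`card_bad_le`); reflection and complementation give four such events, so at
least a quarter of the `2^(n-76)` choices of `M` work.
-/

open Finset Pointwise

/-- A finite set of integers is MSTD (more-sums-than-differences) if `|A+A| > |A-A|`. -/
def MSTD (A : Finset ℤ) : Prop := (A - A).card < (A + A).card

instance (A : Finset ℤ) : Decidable (MSTD A) := by unfold MSTD; infer_instance

/-- The bottom fringe of `A`, found by computer search. -/
def leftFringe : Finset ℤ :=
  {0, 1, 3, 5, 6, 13, 14, 16, 18, 19, 21, 22, 25, 26, 29, 31, 33, 34, 35}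

/-- The complement of `leftFringe` in `[0, 37]`; its reflection is the top fringe of `A`. -/
noncomputable def rightFringe : Finset ℤ := Finset.Ico 0 38 \ leftFringe

/-- What is needed of a fringe `F ⊆ [0, 37]` for the sums `k ≥ 38`: it produces those up to `69` by
itself, and has enough elements to make the later ones likely. -/
def IsFringe (F : Finset ℤ) : Prop :=
  F ⊆ Finset.Ico 0 38 ∧ 19 ≤ F.card ∧ 16 ≤ (F.filter (· ≤ 32)).card ∧
    17 ≤ (F.filter (· ≤ 36)).card ∧ Finset.Ico 38 70 ⊆ F + F

/-- The comparison of low sums (at either end) with extreme differences for a set with bottom fringe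
`F` and reflected top fringe `G`. -/
def FringeBeats (F G : Finset ℤ) : Prop :=
  2 * ((F + G).filter (· < 38)).card < ((F + F).filter (· < 38)).card +
    ((G + G).filter (· < 38)).card

/-- The reflection `x ↦ n-1-x` of `[0, n-1]`. -/
def reflect (n : ℤ) (X : Finset ℤ) : Finset ℤ := X.image (fun x => n - 1 - x)

/-- The free positions, between the two fringes. -/
noncomputable def middle (n : ℤ) : Finset ℤ := Finset.Ico 38 (n - 38)

/-- The set with bottom fringe `F`, middle part `M`, and top fringe the reflection of `G`. -/
def build (n : ℤ) (F G M : Finset ℤ) : Finset ℤ := F ∪ M ∪ reflect n G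

/-- The choices of the middle part for which some sum in `[70, n-1]` is not produced by the bottom
fringe `F` together with the middle. -/
noncomputable def badMiddles (n : ℤ) (F : Finset ℤ) : Finset (Finset ℤ) :=
  (middle n).powerset.filter
    (fun M => ∃ k ∈ Finset.Icc (70 : ℤ) (n - 1), k ∉ (F ∪ M) + (F ∪ M))

/-! ### Properties of the two fringes -/

set_option maxRecDepth 100000 in
theorem isFringe_left : IsFringe leftFringe := by
  unfold IsFringe leftFringe
  refine ⟨?_, ?_, ?_, ?_, ?_⟩ <;> decide +kernel

set_option maxRecDepth 100000 in
theorem isFringe_right : IsFringe rightFringe := by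
  unfold IsFringe rightFringe leftFringe
  refine ⟨?_, ?_, ?_, ?_, ?_⟩ <;> decide +kernel

set_option maxRecDepth 100000 in
theorem fringeBeats_left_right : FringeBeats leftFringe rightFringe := by
  unfold FringeBeats rightFringe leftFringe
  decide +kernel

theorem fringeBeats_right_left : FringeBeats rightFringe leftFringe := by
  have h := fringeBeats_left_right
  unfold FringeBeats at *
  rw [add_comm rightFringe leftFringe]
  omega

theorem mem_right_iff (x : ℤ) : x ∈ rightFringe ↔ (0 ≤ x ∧ x < 38) ∧ x ∉ leftFringe := by
  simp [rightFringe]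

theorem left_bounds {x : ℤ} (h : x ∈ leftFringe) : 0 ≤ x ∧ x < 38 := by
  simpa using isFringe_left.1 h

/-! ### Reflection and complementation -/

theorem mem_reflect {n x : ℤ} {X : Finset ℤ} : x ∈ reflect n X ↔ n - 1 - x ∈ X := by
  unfold reflect
  rw [Finset.mem_image]
  constructor
  · rintro ⟨a, ha, rfl⟩
    simpa using ha
  · intro h
    exact ⟨_, h, by ring⟩

theorem mem_middle {n x : ℤ} : x ∈ middle n ↔ 38 ≤ x ∧ x < n - 38 := by
  simp [middle]

theorem mem_build {n x : ℤ} {F G M : Finset ℤ} :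
    x ∈ build n F G M ↔ x ∈ F ∨ x ∈ M ∨ n - 1 - x ∈ G := by
  simp [build, mem_reflect]

theorem reflect_reflect (n : ℤ) (X : Finset ℤ) : reflect n (reflect n X) = X := by
  ext x
  simp [mem_reflect]

theorem reflect_subset_middle {n : ℤ} {M : Finset ℤ} (h : M ⊆ middle n) :
    reflect n M ⊆ middle n := by
  intro x hx
  have := mem_middle.1 (h (mem_reflect.1 hx))
  exact mem_middle.2 (by omega)

theorem compl_build {n : ℤ} (hn : 200 ≤ n) {M : Finset ℤ} (hM : M ⊆ middle n) :
    Finset.Icc 0 (n - 1) \ build n leftFringe rightFringe M =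
      build n rightFringe leftFringe (middle n \ M) := by
  ext x
  have h1 : x ∈ leftFringe → 0 ≤ x ∧ x < 38 := left_bounds
  have h2 : n - 1 - x ∈ leftFringe → 0 ≤ n - 1 - x ∧ n - 1 - x < 38 := left_bounds
  have h3 : x ∈ M → 38 ≤ x ∧ x < n - 38 := fun h => mem_middle.1 (hM h)
  simp only [Finset.mem_sdiff, mem_build, mem_right_iff, Finset.mem_Icc, mem_middle]
  by_cases a : x ∈ leftFringe <;> by_cases b : n - 1 - x ∈ leftFringe <;> by_cases c : x ∈ M <;>
    simp [a, b, c] at * <;> omega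

/-! ### The deterministic part -/

/-- A prescribed comparison of the fringes decides the MSTD property once all middle sums are
present: those up to `n-1` by the first hypothesis, the others by the reflected one. -/
theorem mstd_build {n : ℤ} (hn : 200 ≤ n) {F G M : Finset ℤ} (hF : IsFringe F) (hG : IsFringe G)
    (hFG : FringeBeats F G) (hM : M ⊆ middle n)
    (h1 : ∀ k ∈ Finset.Icc (70 : ℤ) (n - 1), k ∈ (F ∪ M) + (F ∪ M))
    (h2 : ∀ k ∈ Finset.Icc (70 : ℤ) (n - 1), k ∈ (G ∪ reflect n M) + (G ∪ reflect n M)) :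
    MSTD (build n F G M) := by
  have bF : ∀ x ∈ F, 0 ≤ x ∧ x < 38 := fun x hx => by simpa using hF.1 hx
  have bG : ∀ x ∈ G, 0 ≤ x ∧ x < 38 := fun x hx => by simpa using hG.1 hx
  have bM : ∀ x ∈ M, 38 ≤ x ∧ x < n - 38 := fun x hx => mem_middle.1 (hM hx)
  set X := build n F G M with hX
  have low : ∀ k, k ∈ (F ∪ M) + (F ∪ M) → k ∈ X + X := by
    intro k hk
    refine Finset.add_subset_add ?_ ?_ hk <;>
    · intro x hx
      rw [hX, mem_build]
      rcases Finset.mem_union.1 hx with h | h <;> simp [h]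
  have high : ∀ k, k ∈ (G ∪ reflect n M) + (G ∪ reflect n M) → 2 * n - 2 - k ∈ X + X := by
    intro k hk
    obtain ⟨x, hx, y, hy, rfl⟩ := Finset.mem_add.1 hk
    have key : ∀ z ∈ G ∪ reflect n M, n - 1 - z ∈ X := by
      intro z hz
      rw [hX, mem_build]
      rcases Finset.mem_union.1 hz with h | h
      · right; right; simpa using h
      · right; left; exact mem_reflect.1 h
    exact Finset.mem_add.2 ⟨_, key x hx, _, key y hy, by ring⟩
  have lowFF : ∀ k ∈ F + F, k ∈ X + X := fun k hk =>
    low k (Finset.add_subset_add Finset.subset_union_left Finset.subset_union_left hk)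
  have highGG : ∀ k ∈ G + G, 2 * n - 2 - k ∈ X + X := fun k hk =>
    high k (Finset.add_subset_add Finset.subset_union_left Finset.subset_union_left hk)
  have mid1 : ∀ k, 38 ≤ k → k ≤ n - 1 → k ∈ X + X := by
    intro k ha hb
    by_cases hk : k < 70
    · exact lowFF k (hF.2.2.2.2 (Finset.mem_Ico.2 ⟨ha, hk⟩))
    · exact low k (h1 k (Finset.mem_Icc.2 ⟨by omega, hb⟩))
  have mid2 : ∀ k, 38 ≤ k → k ≤ n - 1 → 2 * n - 2 - k ∈ X + X := by
    intro k ha hb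
    by_cases hk : k < 70
    · exact highGG k (hG.2.2.2.2 (Finset.mem_Ico.2 ⟨ha, hk⟩))
    · exact high k (h2 k (Finset.mem_Icc.2 ⟨by omega, hb⟩))
  set a := (F + F).filter (· < 38) with ha
  set b := (G + G).filter (· < 38) with hb
  set c := (F + G).filter (· < 38) with hc
  set b' := b.image (fun k => 2 * n - 2 - k) with hb'
  have cb' : b'.card = b.card :=
    Finset.card_image_of_injective _ (fun x y h => by simpa using h)
  have sums : a.card + (2 * n - 77).toNat + b.card ≤ (X + X).card := by
    have hsub : a ∪ Finset.Ico 38 (2 * n - 39) ∪ b' ⊆ X + X := by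
      intro k hk
      simp only [Finset.mem_union, Finset.mem_Ico] at hk
      rcases hk with (hk | hk) | hk
      · exact lowFF k (Finset.mem_filter.1 hk).1
      · by_cases h : k ≤ n - 1
        · exact mid1 k hk.1 h
        · have := mid2 (2 * n - 2 - k) (by omega) (by omega)
          simpa using this
      · obtain ⟨z, hz, rfl⟩ := Finset.mem_image.1 hk
        exact highGG z (Finset.mem_filter.1 hz).1
    have hb'lo : ∀ k ∈ b', 2 * n - 39 ≤ k := by
      intro k hk
      obtain ⟨z, hz, rfl⟩ := Finset.mem_image.1 hk
      have := (Finset.mem_filter.1 hz).2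
      omega
    have d1 : Disjoint a (Finset.Ico 38 (2 * n - 39)) := by
      rw [Finset.disjoint_left]
      intro k hk hk'
      have := (Finset.mem_filter.1 hk).2
      have := Finset.mem_Ico.1 hk'
      omega
    have d2 : Disjoint (a ∪ Finset.Ico 38 (2 * n - 39)) b' := by
      rw [Finset.disjoint_left]
      intro k hk hk'
      have h0 := hb'lo k hk'
      rcases Finset.mem_union.1 hk with h | h
      · have := (Finset.mem_filter.1 h).2
        omega
      · have := Finset.mem_Ico.1 h
        omega
    have := Finset.card_le_card hsub
    rw [Finset.card_union_of_disjoint d2, Finset.card_union_of_disjoint d1, Int.card_Ico, cb'] at this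
    have e : 2 * n - 39 - 38 = 2 * n - 77 := by ring
    rwa [e] at this
  have diffs : (X - X).card ≤ (2 * n - 77).toNat + 2 * c.card := by
    have big : ∀ x ∈ X, ∀ y ∈ X, n - 38 ≤ x - y → n - 1 - (x - y) ∈ c := by
      intro x hx y hy hxy
      rw [hX, mem_build] at hx hy
      have hx' : n - 1 - x ∈ G := by
        rcases hx with h | h | h
        · have := bF x h
          rcases hy with h' | h' | h'
          · have := bF y h'; omega
          · have := bM y h'; omega
          · have := bG _ h'; omega
        · have := bM x h
          rcases hy with h' | h' | h'
          · have := bF y h'; omega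
          · have := bM y h'; omega
          · have := bG _ h'; omega
        · exact h
      have hy' : y ∈ F := by
        have := bG _ hx'
        rcases hy with h' | h' | h'
        · exact h'
        · have := bM y h'; omega
        · have := bG _ h'; omega
      rw [hc, Finset.mem_filter]
      exact ⟨Finset.mem_add.2 ⟨y, hy', _, hx', by ring⟩, by omega⟩
    have hsub : X - X ⊆ Finset.Icc (-(n - 39)) (n - 39) ∪
        (c.image (fun k => n - 1 - k) ∪ c.image (fun k => k - (n - 1))) := by
      intro d hd
      obtain ⟨x, hx, y, hy, rfl⟩ := Finset.mem_sub.1 hd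
      simp only [Finset.mem_union, Finset.mem_Icc, Finset.mem_image]
      by_cases p : n - 38 ≤ x - y
      · exact Or.inr (Or.inl ⟨_, big x hx y hy p, by ring⟩)
      · by_cases q : n - 38 ≤ y - x
        · exact Or.inr (Or.inr ⟨_, big y hy x hx q, by ring⟩)
        · exact Or.inl ⟨by omega, by omega⟩
    have h0 := Finset.card_le_card hsub
    have h1 := Finset.card_union_le (Finset.Icc (-(n - 39)) (n - 39))
      (c.image (fun k => n - 1 - k) ∪ c.image (fun k => k - (n - 1)))
    have h2 := Finset.card_union_le (c.image (fun k => n - 1 - k)) (c.image (fun k => k - (n - 1)))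
    have h3 : (c.image (fun k => n - 1 - k)).card ≤ c.card := Finset.card_image_le
    have h4 : (c.image (fun k => k - (n - 1))).card ≤ c.card := Finset.card_image_le
    rw [Int.card_Icc] at h1
    omega
  have hbeats : 2 * c.card < a.card + b.card := hFG
  unfold MSTD
  omega

/-! ### Counting the bad middle parts -/

/-- Avoiding disjoint sets of size at most `2` consists of independent events, each of probability
at most `3/4`. -/
theorem card_avoid_le (I : Finset ℤ) (B : ℤ → Finset ℤ) (hcard : ∀ i ∈ I, (B i).card ≤ 2) :
    ∀ S : Finset ℤ, (∀ i ∈ I, B i ⊆ S) →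
    (∀ i ∈ I, ∀ j ∈ I, i ≠ j → Disjoint (B i) (B j)) →
    ((S.powerset.filter (fun M => ∀ i ∈ I, ¬ B i ⊆ M)).card : ℝ) ≤
      (3 / 4) ^ I.card * 2 ^ S.card := by
  classical
  induction I using Finset.induction_on with
  | empty => intro S _ _; simp
  | insert a I ha ih =>
    intro S hS hd
    have ih' := ih (fun i hi => hcard i (Finset.mem_insert_of_mem hi)) (S \ B a)
      (fun i hi => by
        rw [Finset.subset_sdiff]
        refine ⟨hS i (Finset.mem_insert_of_mem hi), hd i (Finset.mem_insert_of_mem hi) a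
          (Finset.mem_insert_self _ _) ?_⟩
        rintro rfl
        exact ha hi)
      (fun i hi j hj => hd i (Finset.mem_insert_of_mem hi) j (Finset.mem_insert_of_mem hj))
    have hBS : B a ⊆ S := hS a (Finset.mem_insert_self _ _)
    set N := ((S \ B a).powerset.filter (fun M => ∀ i ∈ I, ¬ B i ⊆ M)) with hN
    -- `M` splits into a proper subset of `B a` and a subset of `S \ B a` avoiding the other sets.
    have hle : (S.powerset.filter (fun M => ∀ i ∈ insert a I, ¬ B i ⊆ M)).card ≤
        (((B a).powerset.erase (B a)) ×ˢ N).card := by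
      apply Finset.card_le_card_of_injOn (fun M => (M ∩ B a, M \ B a))
      · intro M hM
        have hM := Finset.mem_coe.1 hM
        rw [Finset.mem_filter, Finset.mem_powerset] at hM
        apply Finset.mem_coe.2
        rw [Finset.mem_product]
        refine ⟨?_, ?_⟩
        · rw [Finset.mem_erase, Finset.mem_powerset]
          refine ⟨fun h => hM.2 a (Finset.mem_insert_self _ _) ?_, Finset.inter_subset_right⟩
          exact Finset.inter_eq_right.1 h
        · rw [hN, Finset.mem_filter, Finset.mem_powerset]
          refine ⟨Finset.sdiff_subset_sdiff hM.1 (Finset.Subset.refl _), fun i hi h => ?_⟩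
          exact hM.2 i (Finset.mem_insert_of_mem hi) (h.trans Finset.sdiff_subset)
      · intro M _ M' _ h
        simp only [Prod.mk.injEq] at h
        rw [← Finset.sdiff_union_inter M (B a), h.1, h.2, Finset.sdiff_union_inter]
    rw [Finset.card_product, Finset.card_erase_of_mem (Finset.mem_powerset_self _),
      Finset.card_powerset] at hle
    have hb := hcard a (Finset.mem_insert_self _ _)
    have hSc : (2 : ℝ) ^ S.card = 2 ^ (B a).card * 2 ^ (S \ B a).card := by
      rw [← pow_add, add_comm, Finset.card_sdiff_add_card_eq_card hBS]
    rw [Finset.card_insert_of_notMem ha, hSc, pow_succ]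
    have hfac : (((2 ^ (B a).card - 1 : ℕ)) : ℝ) ≤ 3 / 4 * 2 ^ (B a).card := by
      interval_cases (B a).card <;> norm_num
    calc ((S.powerset.filter (fun M => ∀ i ∈ insert a I, ¬ B i ⊆ M)).card : ℝ)
        ≤ ((2 ^ (B a).card - 1 : ℕ) : ℝ) * (N.card : ℝ) := by exact_mod_cast hle
      _ ≤ (3 / 4 * 2 ^ (B a).card) * ((3 / 4) ^ I.card * 2 ^ (S \ B a).card) := by
          gcongr
      _ = _ := by ring

/-- The sum `k` is avoided only if `M` avoids the sets `{x, k-x}` for middle positions `x ≤ k/2`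
and the singletons `{k-x}` for fringe elements `x ∈ J` whose partner `k-x` lies in the middle. -/
theorem card_miss_le_aux {n k : ℤ} (hk : 70 ≤ k) (hkn : k ≤ n - 1) {F J : Finset ℤ}
    (hF : IsFringe F) (hJ : J ⊆ F) (hJk : ∀ x ∈ J, k - x ∈ middle n) (t : ℕ)
    (ht : (t : ℤ) ≤ J.card + max 0 (k / 2 - 37)) :
    (((middle n).powerset.filter (fun M => k ∉ (F ∪ M) + (F ∪ M))).card : ℝ) ≤
      (3 / 4) ^ t * 2 ^ (middle n).card := by
  have bF : ∀ x ∈ F, 0 ≤ x ∧ x < 38 := fun x hx => by simpa using hF.1 hx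
  set I := J ∪ Finset.Icc 38 (k / 2) with hI
  have hdisj : Disjoint J (Finset.Icc 38 (k / 2)) := by
    rw [Finset.disjoint_left]
    intro x hx hx'
    have := bF x (hJ hx)
    have := Finset.mem_Icc.1 hx'
    omega
  have hIc : t ≤ I.card := by
    rw [hI, Finset.card_union_of_disjoint hdisj, Int.card_Icc]
    omega
  have hhalf : ∀ x ∈ I, 2 * x ≤ k := by
    intro x hx
    rcases Finset.mem_union.1 hx with h | h
    · have := bF x (hJ h)
      have := mem_middle.1 (hJk x h)
      omega
    · have := Finset.mem_Icc.1 h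
      omega
  have hmain := card_avoid_le I (fun x => ({x, k - x} : Finset ℤ) ∩ middle n)
    (fun i _ => (Finset.card_le_card Finset.inter_subset_left).trans Finset.card_le_two)
    (middle n) (fun i _ => Finset.inter_subset_right)
    (by
      intro x hx y hy hxy
      have := hhalf x hx
      have := hhalf y hy
      rw [Finset.disjoint_left]
      intro z hz hz'
      simp only [Finset.mem_inter, Finset.mem_insert, Finset.mem_singleton] at hz hz'
      omega)
  have hsub : (middle n).powerset.filter (fun M => k ∉ (F ∪ M) + (F ∪ M)) ⊆
      (middle n).powerset.filter
        (fun M => ∀ i ∈ I, ¬ ({i, k - i} : Finset ℤ) ∩ middle n ⊆ M) := by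
    intro M hM
    rw [Finset.mem_filter] at hM ⊢
    refine ⟨hM.1, fun x hx hxM => hM.2 ?_⟩
    refine Finset.mem_add.2 ⟨x, ?_, k - x, ?_, by ring⟩
    · rcases Finset.mem_union.1 hx with h | h
      · exact Finset.mem_union_left _ (hJ h)
      · have := Finset.mem_Icc.1 h
        refine Finset.mem_union_right _ (hxM (Finset.mem_inter.2 ⟨by simp, mem_middle.2 ?_⟩))
        omega
    · refine Finset.mem_union_right _ (hxM (Finset.mem_inter.2 ⟨by simp, ?_⟩))
      rcases Finset.mem_union.1 hx with h | h
      · exact hJk x h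
      · have := Finset.mem_Icc.1 h
        exact mem_middle.2 (by omega)
  calc (((middle n).powerset.filter (fun M => k ∉ (F ∪ M) + (F ∪ M))).card : ℝ)
      ≤ _ := by exact_mod_cast Finset.card_le_card hsub
    _ ≤ _ := hmain
    _ ≤ _ := by
      gcongr ?_ * _
      exact pow_le_pow_of_le_one (by norm_num) (by norm_num) hIc

theorem card_miss_le {n : ℤ} (hn : 200 ≤ n) {F : Finset ℤ} (hF : IsFringe F) (j : ℕ)
    (hkn : 70 + (j : ℤ) ≤ n - 1) :
    (((middle n).powerset.filter (fun M => 70 + (j : ℤ) ∉ (F ∪ M) + (F ∪ M))).card : ℝ) ≤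
      (3 / 4) ^ (16 + j / 4) * 2 ^ (middle n).card := by
  have bF : ∀ x ∈ F, 0 ≤ x ∧ x < 38 := fun x hx => by simpa using hF.1 hx
  by_cases h1 : 70 + (j : ℤ) < n - 38
  · by_cases h2 : j < 4
    · refine card_miss_le_aux (J := F.filter (· ≤ 32)) (by omega) hkn hF
        (Finset.filter_subset _ _) ?_ _ ?_
      · intro x hx
        rw [Finset.mem_filter] at hx
        have := bF x hx.1
        exact mem_middle.2 (by omega)
      · have := hF.2.2.1
        omega
    · by_cases h3 : j < 6
      · refine card_miss_le_aux (J := F.filter (· ≤ 36)) (by omega) hkn hF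
          (Finset.filter_subset _ _) ?_ _ ?_
        · intro x hx
          rw [Finset.mem_filter] at hx
          have := bF x hx.1
          exact mem_middle.2 (by omega)
        · have := hF.2.2.2.1
          omega
      · refine card_miss_le_aux (J := F) (by omega) hkn hF (Finset.Subset.refl _) ?_ _ ?_
        · intro x hx
          have := bF x hx
          exact mem_middle.2 (by omega)
        · have := hF.2.1
          omega
  · -- Here `k - x` may fall into the top fringe, but the middle pairs alone suffice.
    refine card_miss_le_aux (J := ∅) (by omega) hkn hF (Finset.empty_subset _) (by simp) _ ?_
    rw [Finset.card_empty]
    omega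

theorem sum_geom_le (m : ℕ) : ∑ j ∈ Finset.range m, (3 / 4 : ℝ) ^ (16 + j / 4) ≤ 3 / 16 := by
  have h4 : ∀ m : ℕ, ∑ j ∈ Finset.range (4 * m), (3 / 4 : ℝ) ^ (16 + j / 4) =
      16 * (3 / 4) ^ 16 * (1 - (3 / 4) ^ m) := by
    intro m
    induction m with
    | zero => simp
    | succ m ih =>
      rw [show 4 * (m + 1) = 4 * m + 1 + 1 + 1 + 1 by ring]
      simp only [Finset.sum_range_succ]
      rw [ih, show 4 * m / 4 = m by omega, show (4 * m + 1) / 4 = m by omega,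
        show (4 * m + 1 + 1) / 4 = m by omega, show (4 * m + 1 + 1 + 1) / 4 = m by omega]
      ring
  have hle : ∑ j ∈ Finset.range m, (3 / 4 : ℝ) ^ (16 + j / 4) ≤
      ∑ j ∈ Finset.range (4 * m), (3 / 4 : ℝ) ^ (16 + j / 4) :=
    Finset.sum_le_sum_of_subset_of_nonneg (Finset.range_subset_range.2 (by omega))
      (fun _ _ _ => by positivity)
  rw [h4] at hle
  have hp : (0 : ℝ) ≤ (3 / 4) ^ m := by positivity
  have hc : (16 : ℝ) * (3 / 4) ^ 16 ≤ 3 / 16 := by norm_num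
  nlinarith

theorem card_bad_le {n : ℤ} (hn : 200 ≤ n) {F : Finset ℤ} (hF : IsFringe F) :
    ((badMiddles n F).card : ℝ) ≤ 3 / 16 * 2 ^ (middle n).card := by
  classical
  set m := (n - 70).toNat with hm
  have hsub : badMiddles n F ⊆ (Finset.range m).biUnion (fun j =>
      (middle n).powerset.filter (fun M => 70 + (j : ℤ) ∉ (F ∪ M) + (F ∪ M))) := by
    intro M hM
    rw [badMiddles, Finset.mem_filter] at hM
    obtain ⟨h0, k, hk, hkM⟩ := hM
    rw [Finset.mem_Icc] at hk
    refine Finset.mem_biUnion.2 ⟨(k - 70).toNat, Finset.mem_range.2 (by omega), ?_⟩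
    have e : 70 + (((k - 70).toNat : ℕ) : ℤ) = k := by omega
    rw [Finset.mem_filter, e]
    exact ⟨h0, hkM⟩
  have h1 := (Finset.card_le_card hsub).trans Finset.card_biUnion_le
  calc ((badMiddles n F).card : ℝ)
      ≤ ∑ j ∈ Finset.range m, (((middle n).powerset.filter
          (fun M => 70 + (j : ℤ) ∉ (F ∪ M) + (F ∪ M))).card : ℝ) := by exact_mod_cast h1
    _ ≤ ∑ j ∈ Finset.range m, (3 / 4 : ℝ) ^ (16 + j / 4) * 2 ^ (middle n).card := by
        refine Finset.sum_le_sum (fun j hj => card_miss_le hn hF j ?_)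
        have := Finset.mem_range.1 hj
        omega
    _ = (∑ j ∈ Finset.range m, (3 / 4 : ℝ) ^ (16 + j / 4)) * 2 ^ (middle n).card := by
        rw [Finset.sum_mul]
    _ ≤ _ := by
        gcongr
        exact sum_geom_le m

/-- The bound of `card_bad_le` for a transformed middle part; used with reflection,
complementation and their composite. -/
theorem card_bad_comp_le {n : ℤ} (hn : 200 ≤ n) {F : Finset ℤ} (hF : IsFringe F)
    (φ : Finset ℤ → Finset ℤ)
    (hinj : ∀ M ⊆ middle n, ∀ M' ⊆ middle n, φ M = φ M' → M = M') :
    (((middle n).powerset.filter (fun M => φ M ∈ badMiddles n F)).card : ℝ) ≤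
      3 / 16 * 2 ^ (middle n).card := by
  refine le_trans ?_ (card_bad_le hn hF)
  have : ((middle n).powerset.filter (fun M => φ M ∈ badMiddles n F)).card ≤
      (badMiddles n F).card := by
    apply Finset.card_le_card_of_injOn φ
    · intro M hM
      exact (Finset.mem_filter.1 (Finset.mem_coe.1 hM)).2
    · intro M hM M' hM' h
      exact hinj M (Finset.mem_powerset.1 (Finset.mem_filter.1 (Finset.mem_coe.1 hM)).1)
        M' (Finset.mem_powerset.1 (Finset.mem_filter.1 (Finset.mem_coe.1 hM')).1) h
  exact_mod_cast this

theorem sums_of_not_bad {n : ℤ} {F M : Finset ℤ} (hM : M ⊆ middle n) (h : M ∉ badMiddles n F) :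
    ∀ k ∈ Finset.Icc (70 : ℤ) (n - 1), k ∈ (F ∪ M) + (F ∪ M) := by
  intro k hk
  by_contra hc
  exact h (Finset.mem_filter.2 ⟨Finset.mem_powerset.2 hM, k, hk, hc⟩)

theorem sdiff_middle_inj {n : ℤ} {M M' : Finset ℤ} (hM : M ⊆ middle n) (hM' : M' ⊆ middle n)
    (h : middle n \ M = middle n \ M') : M = M' := by
  rw [← Finset.sdiff_sdiff_eq_self hM, h, Finset.sdiff_sdiff_eq_self hM']

theorem stmt19 : ∃ c : ℝ, 0 < c ∧ ∃ r₀ : ℕ, 0 < r₀ ∧ ∀ r : ℕ, r₀ ≤ r →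
    c * 2 ^ r ≤
      (((Finset.Icc (0 : ℤ) ((r : ℤ) - 1)).powerset.filter (fun A =>
          MSTD A ∧ MSTD (Finset.Icc (0 : ℤ) ((r : ℤ) - 1) \ A))).card : ℝ) := by
  classical
  -- `76` fixed positions, and a quarter of the choices for the remaining ones.
  refine ⟨1 / 2 ^ 78, by positivity, 200, by norm_num, fun r hr => ?_⟩
  obtain ⟨n, hn⟩ : ∃ n : ℤ, n = r := ⟨_, rfl⟩
  rw [← hn]
  have hn200 : 200 ≤ n := by omega
  set P := (middle n).powerset with hP
  have reflect_inj : ∀ M M' : Finset ℤ, reflect n M = reflect n M' → M = M' := by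
    intro M M' h
    rw [← reflect_reflect n M, h, reflect_reflect]
  set b1 := P.filter (fun M => M ∈ badMiddles n leftFringe) with hb1
  set b2 := P.filter (fun M => reflect n M ∈ badMiddles n rightFringe) with hb2
  set b3 := P.filter (fun M => middle n \ M ∈ badMiddles n rightFringe) with hb3
  set b4 := P.filter (fun M => reflect n (middle n \ M) ∈ badMiddles n leftFringe) with hb4
  have c1 : (b1.card : ℝ) ≤ 3 / 16 * 2 ^ (middle n).card :=
    card_bad_comp_le hn200 isFringe_left (fun M => M) (fun _ _ _ _ h => h)
  have c2 : (b2.card : ℝ) ≤ 3 / 16 * 2 ^ (middle n).card :=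
    card_bad_comp_le hn200 isFringe_right (fun M => reflect n M)
      (fun _ _ _ _ h => reflect_inj _ _ h)
  have c3 : (b3.card : ℝ) ≤ 3 / 16 * 2 ^ (middle n).card :=
    card_bad_comp_le hn200 isFringe_right (fun M => middle n \ M)
      (fun _ h _ h' e => sdiff_middle_inj h h' e)
  have c4 : (b4.card : ℝ) ≤ 3 / 16 * 2 ^ (middle n).card :=
    card_bad_comp_le hn200 isFringe_left (fun M => reflect n (middle n \ M))
      (fun _ h _ h' e => sdiff_middle_inj h h' (reflect_inj _ _ e))
  set good := P \ (b1 ∪ b2 ∪ b3 ∪ b4) with hgood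
  have hcov : P.card ≤ good.card + (b1.card + b2.card + b3.card + b4.card) := by
    have h0 : P.card ≤ (good ∪ (b1 ∪ b2 ∪ b3 ∪ b4)).card := by
      apply Finset.card_le_card
      intro M hM
      by_cases h : M ∈ b1 ∪ b2 ∪ b3 ∪ b4
      · exact Finset.mem_union_right _ h
      · exact Finset.mem_union_left _ (Finset.mem_sdiff.2 ⟨hM, h⟩)
    have h1 := Finset.card_union_le good (b1 ∪ b2 ∪ b3 ∪ b4)
    have h2 := Finset.card_union_le (b1 ∪ b2 ∪ b3) b4
    have h3 := Finset.card_union_le (b1 ∪ b2) b3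
    have h4 := Finset.card_union_le b1 b2
    omega
  have hPc : P.card = 2 ^ (middle n).card := Finset.card_powerset _
  have hcovR : (2 : ℝ) ^ (middle n).card ≤
      good.card + (b1.card + b2.card + b3.card + b4.card) := by
    rw [hPc] at hcov
    exact_mod_cast hcov
  have hgoodc : 1 / 4 * (2 : ℝ) ^ (middle n).card ≤ good.card := by linarith
  have hinto : good.card ≤ ((Finset.Icc (0 : ℤ) (n - 1)).powerset.filter (fun A =>
          MSTD A ∧ MSTD (Finset.Icc (0 : ℤ) (n - 1) \ A))).card := by
    apply Finset.card_le_card_of_injOn (build n leftFringe rightFringe)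
    · intro M hM
      obtain ⟨hMP, hMb⟩ := Finset.mem_sdiff.1 (Finset.mem_coe.1 hM)
      have hMs : M ⊆ middle n := Finset.mem_powerset.1 hMP
      have hMc : middle n \ M ⊆ middle n := Finset.sdiff_subset
      simp only [Finset.mem_union, hb1, hb2, hb3, hb4, Finset.mem_filter, hMP, true_and,
        not_or] at hMb
      obtain ⟨⟨⟨n1, n2⟩, n3⟩, n4⟩ := hMb
      apply Finset.mem_coe.2
      rw [Finset.mem_filter, Finset.mem_powerset, compl_build hn200 hMs]
      refine ⟨?_, ?_, ?_⟩
      · intro x hx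
        rw [Finset.mem_Icc]
        rcases mem_build.1 hx with h | h | h
        · have := left_bounds h
          omega
        · have := mem_middle.1 (hMs h)
          omega
        · have := (mem_right_iff _).1 h
          omega
      · exact mstd_build hn200 isFringe_left isFringe_right fringeBeats_left_right hMs
          (sums_of_not_bad hMs n1) (sums_of_not_bad (reflect_subset_middle hMs) n2)
      · exact mstd_build hn200 isFringe_right isFringe_left fringeBeats_right_left hMc
          (sums_of_not_bad hMc n3) (sums_of_not_bad (reflect_subset_middle hMc) n4)
    · have hrec : ∀ M ∈ good, build n leftFringe rightFringe M ∩ middle n = M := by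
        intro M hM
        have hMs : M ⊆ middle n := Finset.mem_powerset.1 (Finset.mem_sdiff.1 hM).1
        ext x
        rw [Finset.mem_inter, mem_build, mem_middle]
        constructor
        · rintro ⟨h | h | h, hx⟩
          · have := left_bounds h
            omega
          · exact h
          · have := (mem_right_iff _).1 h
            omega
        · intro h
          exact ⟨Or.inr (Or.inl h), mem_middle.1 (hMs h)⟩
      intro M hM M' hM' h
      rw [← hrec M (Finset.mem_coe.1 hM), h, hrec M' (Finset.mem_coe.1 hM')]
  have hmid : (middle n).card + 76 = r := by
    rw [middle, Int.card_Ico]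
    omega
  calc (1 / 2 ^ 78 : ℝ) * 2 ^ r = 1 / 4 * 2 ^ (middle n).card := by
        rw [← hmid, pow_add]
        norm_num
        ring
    _ ≤ good.card := hgoodc
    _ ≤ _ := by exact_mod_cast hinto
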